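/- For x, y ∈ A* and a ∈ A, the queue actions [x̄ y a] and [x̄ a y] are related by the reflexive-transitive closure of the transposition relation ∼ on Q (where p ∼ q iff p = rs and q = sr for some r, s ∈ Q). -/

import Mathlib

/-- A basic queue action: write a letter or read a letter. -/
inductive Act (A : Type) : Type
  | wr (a : A)
  | rd (a : A)
deriving DecidableEq

variable {A : Type} [DecidableEq A]

/-- The action of words over `Act A` on queue states `A* ∪ {⊥}` (⊥ = `none`). -/
def act : Option (List A) → List (Act A) → Option (List A)
  | q, [] => q
  | none, _ :: _ => none
  | some q, (Act.wr a) :: u => act (some (q ++ [a])) u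
  | some q, (Act.rd a) :: u =>
    match q with
    | [] => none
    | b :: q' => if b = a then act (some q') u else none

/-- Two words over `Act A` are equivalent if they act identically on all queues. -/
def qequiv (u v : List (Act A)) : Prop := ∀ q : List A, act (some q) u = act (some q) v

/-- Writing the word `w`. -/
def W (w : List A) : List (Act A) := w.map Act.wr

/-- Reading the word `w` (the barred copy of `w`). -/
def R (w : List A) : List (Act A) := w.map Act.rd

/-- `shuffle s` is the word `s₁ s̄₁ s₂ s̄₂ … sₖ s̄ₖ`. -/
def shuffle (s : List A) : List (Act A) := s.flatMap fun a => [Act.wr a, Act.rd a]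

/-- The projection to write letters. -/
def prW (w : List (Act A)) : List A :=
  w.filterMap fun x => match x with | Act.wr a => some a | Act.rd _ => none

/-- The projection to read letters (with the bars removed). -/
def prR (w : List (Act A)) : List A :=
  w.filterMap fun x => match x with | Act.wr _ => none | Act.rd a => some a

theorem act_append (u v : List (Act A)) : ∀ q, act q (u ++ v) = act (act q u) v := by
  induction u with
  | nil =>
      intro q
      cases q <;> rfl
  | cons x u ih =>
      intro q
      cases q with
      | none =>
          simp only [List.cons_append, act]
          cases v with
          | nil => rfl
          | cons _ _ => rfl
      | some q =>
          cases x with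
          | wr a => simpa [act] using ih _
          | rd a =>
              cases q with
              | nil =>
                  simp only [List.cons_append, act]
                  cases v with
                  | nil => rfl
                  | cons _ _ => rfl
              | cons b q' =>
                  by_cases h : b = a
                  · simp [List.cons_append, act, h, ih]
                  · simp only [List.cons_append, act, if_neg h]
                    cases v with
                    | nil => rfl
                    | cons _ _ => rfl

/-- The setoid of queue-action equivalence. -/
def qsetoid (A : Type) [DecidableEq A] : Setoid (List (Act A)) :=
  ⟨qequiv, ⟨fun _ _ => rfl, fun h q => (h q).symm, fun h1 h2 q => (h1 q).trans (h2 q)⟩⟩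

/-- The monoid of queue actions. -/
def QAct (A : Type) [DecidableEq A] : Type := Quotient (qsetoid A)

theorem act_none : ∀ v : List (Act A), act (none : Option (List A)) v = none
  | [] => rfl
  | _ :: _ => rfl

theorem qequiv_append {u u' v v' : List (Act A)} (hu : qequiv u u') (hv : qequiv v v') :
    qequiv (u ++ v) (u' ++ v') := by
  intro q
  rw [act_append, act_append, hu q]
  cases h : act (some q) u' with
  | none => rw [act_none, act_none]
  | some q' => exact hv q'

instance : Monoid (QAct A) where
  mul := Quotient.map₂ (· ++ ·) (fun _ _ hu _ _ hv => qequiv_append hu hv)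
  one := Quotient.mk (qsetoid A) []
  mul_assoc := by
    rintro ⟨u⟩ ⟨v⟩ ⟨w⟩
    exact congrArg (Quotient.mk (qsetoid A)) (List.append_assoc u v w)
  one_mul := by
    rintro ⟨u⟩
    rfl
  mul_one := by
    rintro ⟨u⟩
    exact congrArg (Quotient.mk (qsetoid A)) (List.append_nil u)

/-- The class of a word in the monoid of queue actions. -/
def cls (w : List (Act A)) : QAct A := Quotient.mk (qsetoid A) w

theorem cls_mul (u v : List (Act A)) : cls u * cls v = cls (u ++ v) := rfl

/-!
The final letter `a` of the writes has to be rotated to the front. Write `x = s aⁿ`, where `s` does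
not end in `a`, so that writing `a` commutes with reading `s`. If `s` is not a prefix of `y`, then
with `t = aⁿ`, `[x̄ y a] ∼ [t̄ y a s̄] = [t̄ y s̄ a] ∼ [a t̄ y s̄] = [t̄ a y s̄] ∼ [x̄ a y]`: the
two sides of the second equality could only differ where `a t̄` empties the queue, and then `y s̄`
fails.

Let now `y = s z`, with `s` nonempty and `n > 0`; the other cases are easy, since enough writes
commute with all the reads.

* If `z` is a power of `a`, then every rotation step on the cyclic word `s z a` other than the
  desired one is possible, and a cycle remains connected when one edge is removed.
* Otherwise the writes contain more letters different from `a` than the reads `s aⁿ⁻¹`, which by the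
  dual argument allows rotating the reads to `a s aⁿ⁻¹`. As `a s` is not a prefix of `s z`, the
  written `a` can be rotated there, and then the reads are rotated back.
-/

section Transposition

variable {M : Type*} [Mul M]

/-- The transposition relation `p ∼ q`. -/
def IsTransposition (p q : M) : Prop := ∃ r s : M, p = r * s ∧ q = s * r

/-- Conjugacy as the reflexive-transitive closure of transposition. -/
abbrev TransConj : M → M → Prop := Relation.ReflTransGen IsTransposition

theorem IsTransposition.symm {p q : M} : IsTransposition p q → IsTransposition q p :=
  fun ⟨r, s, hp, hq⟩ => ⟨s, r, hq, hp⟩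

theorem TransConj.symm {p q : M} (h : TransConj p q) : TransConj q p :=
  Relation.reflTransGen_swap.1 (Relation.ReflTransGen.mono (fun _ _ => IsTransposition.symm) _ _ h)

theorem TransConj.mul_comm (r s : M) : TransConj (r * s) (s * r) :=
  .single ⟨r, s, rfl, rfl⟩

end Transposition

local infix:50 " ∼* " => TransConj

section List

variable {α : Type*}

theorem exists_eq_replicate_append (a : α) (l : List α) :
    ∃ n s, l = List.replicate n a ++ s ∧ ¬ [a] <+: s := by
  induction l with
  | nil => exact ⟨0, [], rfl, by simp⟩
  | cons c l ih =>
    by_cases hc : a = c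
    · obtain ⟨n, s, rfl, hs⟩ := ih
      exact ⟨n + 1, s, by simp [hc, List.replicate_succ], hs⟩
    · exact ⟨0, c :: l, rfl, by simpa using hc⟩

theorem exists_eq_append_replicate (a : α) (l : List α) :
    ∃ s n, l = s ++ List.replicate n a ∧ ¬ [a] <:+ s := by
  obtain ⟨n, s, hl, hs⟩ := exists_eq_replicate_append a l.reverse
  refine ⟨s.reverse, n, by simpa using congrArg List.reverse hl, fun h => hs ?_⟩
  simpa using List.reverse_prefix.2 h

theorem eq_of_mem_of_cons_prefix_append {a b : α} {s z : List α} (h : a :: s <+: s ++ z)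
    (hb : b ∈ s) : b = a := by
  induction s generalizing a with
  | nil => simp at hb
  | cons c s ih =>
    obtain ⟨rfl, htail⟩ := List.cons_prefix_cons.1 h
    exact (List.mem_cons.1 hb).elim id (ih htail)

/-- A cycle minus one edge is connected: `r` need not hold between `l` and its predecessor. -/
theorem rel_rotate_of_forall_ne {r : List α → List α → Prop} [Std.Refl r] [IsTrans _ r]
    {l : List α} (h : ∀ c w, w ++ [c] ~r l → w ++ [c] ≠ l → r (w ++ [c]) (c :: w)) (n : ℕ) :
    r (l.rotate n) l := by
  induction n with
  | zero => simpa using refl_of r l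
  | succ n ih =>
    cases hrot : l.rotate n with
    | nil =>
      obtain rfl := List.rotate_eq_nil_iff.1 hrot
      simpa using refl_of r []
    | cons c w =>
      have hsucc : l.rotate (n + 1) = w ++ [c] := by simp [← List.rotate_rotate, hrot]
      rw [hsucc]
      rw [hrot] at ih
      by_cases heq : w ++ [c] = l
      · rw [heq]
        exact refl_of r l
      · exact trans_of r (h c w (hsucc ▸ List.IsRotated.forall l (n + 1)) heq) ih

end List

theorem W_append {B : Type} (u v : List B) : W (u ++ v) = W u ++ W v := List.map_append

theorem R_append {B : Type} (u v : List B) : R (u ++ v) = R u ++ R v := List.map_append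

theorem act_W (w q : List A) : act (some q) (W w) = some (q ++ w) := by
  induction w generalizing q with
  | nil => simp [W, act]
  | cons c w ih => simpa [W, act] using ih (q ++ [c])

theorem act_R_append (x q : List A) : act (some (x ++ q)) (R x) = some q := by
  induction x with
  | nil => simp [R, act]
  | cons c x ih => simpa [R, act] using ih

theorem act_R_eq_none {x q : List A} (h : ¬ x <+: q) : act (some q) (R x) = none := by
  induction x generalizing q with
  | nil => simp at h
  | cons c x ih =>
    cases q with
    | nil => rfl
    | cons d q =>
      by_cases hd : d = c
      · simpa [R, act, hd] using ih fun hx => h (List.cons_prefix_cons.2 ⟨hd.symm, hx⟩)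
      · simp [R, act, hd]

/-- Writing before reading makes a difference only if the reads consume a nonempty part `s` of
what was just written; then `p` is left in the queue. -/
theorem act_W_R_comm {q w x : List A} {v : List (Act A)}
    (h : ∀ s p, s ≠ [] → x = q ++ s → w = s ++ p → act (some p) v = none) :
    act (some q) (W w ++ R x ++ v) = act (some q) (R x ++ W w ++ v) := by
  simp only [act_append, act_W]
  by_cases hxq : x <+: q
  · obtain ⟨m, rfl⟩ := hxq
    simp only [List.append_assoc, act_R_append, act_W]
  rw [act_R_eq_none hxq, act_none, act_none]
  by_cases hxqw : x <+: q ++ w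
  · obtain ⟨p, hp⟩ := hxqw
    rw [← hp, act_R_append]
    rcases List.append_eq_append_iff.1 hp with ⟨s, rfl, -⟩ | ⟨s, hx, hw⟩
    · exact absurd (List.prefix_append x s) hxq
    · refine h s p ?_ hx hw
      rintro rfl
      exact hxq (by simp [hx])
  · rw [act_R_eq_none hxqw, act_none]

namespace QAct

/-- The queue action `[w]` of writing the word `w`. -/
def write (w : List A) : QAct A := cls (W w)

/-- The queue action `[x̄]` of reading the word `x`. -/
def read (x : List A) : QAct A := cls (R x)

theorem write_append (u v : List A) : write (u ++ v) = write u * write v :=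
  congrArg cls (W_append u v)

theorem read_append (x y : List A) : read (x ++ y) = read x * read y :=
  congrArg cls (R_append x y)

theorem write_cons (a : A) (y : List A) : write (a :: y) = write [a] * write y := rfl

theorem read_cons (a : A) (y : List A) : read (a :: y) = read [a] * read y := rfl

theorem commute_write_read {w x : List A} (h : ∀ s, s <+: w → s <:+ x → s = []) :
    Commute (write w) (read x) := by
  refine Quotient.sound fun q => ?_
  have := act_W_R_comm (q := q) (w := w) (x := x) (v := [])
    fun s p hs hx hw => absurd (h s ⟨p, hw.symm⟩ ⟨q, hx.symm⟩) hs
  simpa using this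

theorem commute_write_singleton_read {a : A} {x : List A} (h : ¬ [a] <:+ x) :
    Commute (write [a]) (read x) :=
  commute_write_read fun s hs hx => by
    rcases List.prefix_cons_iff.1 hs with rfl | ⟨t, rfl, ht⟩
    · rfl
    · exact absurd (List.prefix_nil.1 ht ▸ hx) h

theorem commute_write_read_replicate {a : A} {w : List A} (h : ¬ [a] <+: w) (n : ℕ) :
    Commute (write w) (read (List.replicate n a)) :=
  commute_write_read fun s hs hx => by
    cases s with
    | nil => rfl
    | cons c s =>
      obtain rfl : c = a := List.eq_of_mem_replicate (hx.subset List.mem_cons_self)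
      exact absurd ((List.prefix_append [c] s).trans hs) h

theorem write_singleton_mul_read_mul_of_not_prefix {s y : List A} (h : ¬ s <+: y) (a : A)
    (t : List A) :
    write [a] * read t * (write y * read s) = read t * write [a] * (write y * read s) := by
  have stuck : act (some []) (W y ++ R s) = none := by
    rw [act_append, act_W, List.nil_append, act_R_eq_none h]
  refine Quotient.sound fun q => act_W_R_comm fun r p hr _ hw => ?_
  obtain ⟨-, rfl⟩ : r = [a] ∧ p = [] := by
    simpa [hr] using List.append_eq_singleton_iff.1 hw.symm
  exact stuck

theorem write_mul_read_mul_read_singleton_of_not_suffix {s y : List A} (h : ¬ s <:+ y) (a : A)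
    (t : List A) :
    write s * read y * (write t * read [a]) = write s * read y * (read [a] * write t) := by
  refine Quotient.sound fun q => ?_
  change act (some q) (W s ++ R y ++ (W t ++ R [a])) = act (some q) (W s ++ R y ++ (R [a] ++ W t))
  rw [act_append _ (W t ++ R [a]), act_append _ (R [a] ++ W t), act_append (W s), act_W]
  by_cases hy : y <+: q ++ s
  · obtain ⟨m, hm⟩ := hy
    have nonempty : m ≠ [] := by
      rintro rfl
      exact h ⟨q, by simpa using hm.symm⟩
    have := act_W_R_comm (q := m) (w := t) (x := [a]) (v := []) fun r p hr hx _ => by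
      simp [List.singleton_eq_append_iff, hr, nonempty] at hx
    rw [← hm, act_R_append]
    simpa using this
  · rw [act_R_eq_none hy, act_none, act_none]

theorem rotate_writes_of_commute {x v : List A}
    (h : Commute (write v) (read x)) (u : List A) :
    read x * write (u ++ v) ∼* read x * write (v ++ u) :=
  calc read x * write (u ++ v)
    _ = read x * write u * write v := by rw [write_append, mul_assoc]
    _ ∼* write v * (read x * write u) := .mul_comm _ _
    _ = read x * write (v ++ u) := by rw [← mul_assoc, h.eq, write_append, mul_assoc]

theorem rotate_write_of_not_prefix {a : A} {s y : List A} (has : ¬ [a] <:+ s) (hsy : ¬ s <+: y)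
    (t : List A) :
    read (s ++ t) * write (y ++ [a]) ∼* read (s ++ t) * write (a :: y) :=
  calc read (s ++ t) * write (y ++ [a])
    _ = read s * (read t * write y * write [a]) := by
      simp only [read_append, write_append, mul_assoc]
    _ ∼* read t * write y * write [a] * read s := .mul_comm _ _
    _ = read t * write y * read s * write [a] := by
      rw [mul_assoc, (commute_write_singleton_read has).eq, ← mul_assoc]
    _ ∼* write [a] * (read t * write y * read s) := .mul_comm _ _
    _ = read t * write [a] * (write y * read s) := by
      rw [← write_singleton_mul_read_mul_of_not_prefix hsy]; simp only [mul_assoc]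
    _ = read t * write [a] * write y * read s := by rw [mul_assoc _ (write y)]
    _ ∼* read s * (read t * write [a] * write y) := .mul_comm _ _
    _ = read (s ++ t) * write (a :: y) := by
      simp only [read_append, write_cons a y, mul_assoc]

theorem rotate_read_of_not_suffix {a : A} {s y : List A} (has : ¬ [a] <+: s) (hsy : ¬ s <:+ y)
    (t : List A) :
    read (a :: y) * write (t ++ s) ∼* read (y ++ [a]) * write (t ++ s) :=
  calc read (a :: y) * write (t ++ s)
    _ = read [a] * read y * write t * write s := by
      simp only [read_cons a y, write_append, mul_assoc]
    _ ∼* write s * (read [a] * read y * write t) := .mul_comm _ _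
    _ = read [a] * (write s * read y * write t) := by
      have := (commute_write_read_replicate has 1).eq
      rw [List.replicate_one] at this
      simp only [← mul_assoc, this]
    _ ∼* write s * read y * write t * read [a] := .mul_comm _ _
    _ = write s * read y * (read [a] * write t) := by
      rw [← write_mul_read_mul_read_singleton_of_not_suffix hsy]; simp only [mul_assoc]
    _ = write s * (read y * read [a] * write t) := by simp only [mul_assoc]
    _ ∼* read y * read [a] * write t * write s := .mul_comm _ _
    _ = read (y ++ [a]) * write (t ++ s) := by simp only [read_append, write_append, mul_assoc]

theorem rotate_read_of_countP_lt {a : A} {y w : List A}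
    (h : y.countP (· ≠ a) < w.countP (· ≠ a)) :
    read (a :: y) * write w ∼* read (y ++ [a]) * write w := by
  obtain ⟨k, s, rfl, has⟩ := exists_eq_replicate_append a w
  refine rotate_read_of_not_suffix has (fun hsy => h.not_ge ?_) _
  simpa [List.countP_replicate] using hsy.sublist.countP_le (p := (· ≠ a))

theorem rotate_write_of_read_replicate (a : A) (n : ℕ) (y : List A) :
    read (List.replicate n a) * write (y ++ [a]) ∼* read (List.replicate n a) * write (a :: y) := by
  obtain ⟨k, s, rfl, has⟩ := exists_eq_replicate_append a y
  rcases eq_or_ne s [] with rfl | hs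
  · rw [List.append_nil, ← List.replicate_succ', ← List.replicate_succ]
  have has' : ¬ [a] <+: s ++ [a] := by
    cases s with
    | nil => exact absurd rfl hs
    | cons d s => simpa using has
  calc read (List.replicate n a) * write (List.replicate k a ++ s ++ [a])
    _ ∼* read (List.replicate n a) * write (s ++ [a] ++ List.replicate k a) := by
      rw [List.append_assoc]
      exact rotate_writes_of_commute (commute_write_read_replicate has' n) _
    _ = read (List.replicate n a) * write (s ++ List.replicate (k + 1) a) := by
      simp [List.replicate_succ]
    _ ∼* read (List.replicate n a) * write (List.replicate (k + 1) a ++ s) :=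
      (rotate_writes_of_commute (commute_write_read_replicate has n) _).symm

theorem rotate_write_of_replicate_tails {a : A} {s : List A} (has : ¬ [a] <:+ s) (n j : ℕ) :
    read (s ++ List.replicate (n + 1) a) * write (s ++ List.replicate j a ++ [a]) ∼*
      read (s ++ List.replicate (n + 1) a) * write (a :: (s ++ List.replicate j a)) := by
  set x := s ++ List.replicate (n + 1) a with hx
  set l := s ++ List.replicate j a ++ [a]
  have hlast (c : A) (hc : c ≠ a) : ¬ [c] <:+ x := by
    simpa [hx, List.replicate_succ', ← List.append_assoc] using hc
  have eq_of_isRotated (w : List A) (hw : w ++ [a] ~r l) (hsw : s <+: w) : w ++ [a] = l := by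
    obtain ⟨z, rfl⟩ := hsw
    have hperm := (List.perm_append_left_iff s).1 ((List.perm_append_right_iff [a]).1 hw.perm)
    rw [List.perm_replicate.1 hperm]
  let r (v w : List A) : Prop := read x * write v ∼* read x * write w
  have : Std.Refl r := ⟨fun _ => .refl⟩
  have : IsTrans _ r := ⟨fun _ _ _ => .trans⟩
  have cycle := rel_rotate_of_forall_ne (r := r) (l := l) fun c w hw hne => by
    by_cases hc : c = a
    · subst hc
      exact rotate_write_of_not_prefix has (fun hsw => hne (eq_of_isRotated w hw hsw)) _
    · exact rotate_writes_of_commute (commute_write_singleton_read (hlast c hc)) w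
  have hrot : l.rotate (s ++ List.replicate j a).length = a :: (s ++ List.replicate j a) :=
    List.rotate_append_length_eq _ _
  exact (hrot ▸ cycle _).symm

theorem rotate_write_of_exists_ne {a : A} {s z : List A} (has : ¬ [a] <:+ s) (hs : s ≠ [])
    (hz : ∃ c ∈ z, c ≠ a) (n : ℕ) :
    read (s ++ List.replicate (n + 1) a) * write (s ++ z ++ [a]) ∼*
      read (s ++ List.replicate (n + 1) a) * write (a :: (s ++ z)) := by
  have hcount : 0 < z.countP (· ≠ a) := by simpa [List.countP_pos_iff] using hz
  have has' : ¬ [a] <:+ a :: s := by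
    rw [List.suffix_cons_iff]
    simp [has, Ne.symm hs]
  have hprefix : ¬ a :: s <+: s ++ z := fun h => by
    have hlast := eq_of_mem_of_cons_prefix_append h (List.getLast_mem hs)
    exact has ⟨s.dropLast, hlast ▸ List.dropLast_append_getLast hs⟩
  rw [List.replicate_succ', ← List.append_assoc]
  calc read (s ++ List.replicate n a ++ [a]) * write (s ++ z ++ [a])
    _ ∼* read (a :: (s ++ List.replicate n a)) * write (s ++ z ++ [a]) :=
      (rotate_read_of_countP_lt (by simpa [List.countP_replicate] using hcount)).symm
    _ ∼* read (a :: (s ++ List.replicate n a)) * write (a :: (s ++ z)) :=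
      rotate_write_of_not_prefix has' hprefix _
    _ ∼* read (s ++ List.replicate n a ++ [a]) * write (a :: (s ++ z)) :=
      rotate_read_of_countP_lt (by simpa [List.countP_replicate] using hcount)

end QAct

open QAct in
theorem stmt14_general (x y : List A) (a : A) :
    Relation.ReflTransGen (fun p q : QAct A => ∃ r s : QAct A, p = r * s ∧ q = s * r)
      (cls (R x ++ W y ++ [Act.wr a])) (cls (R x ++ [Act.wr a] ++ W y)) := by
  suffices h : read x * write (y ++ [a]) ∼* read x * write (a :: y) by
    rwa [write_append, write_cons a y, ← mul_assoc, ← mul_assoc] at h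
  obtain ⟨s, n, rfl, has⟩ := exists_eq_append_replicate a x
  by_cases hsy : s <+: y
  · obtain ⟨z, rfl⟩ := hsy
    rcases eq_or_ne s [] with rfl | hs
    · exact rotate_write_of_read_replicate a n z
    rcases n with _ | n
    · rw [List.replicate_zero, List.append_nil]
      exact rotate_writes_of_commute (commute_write_singleton_read has) _
    by_cases hz : ∃ c ∈ z, c ≠ a
    · exact rotate_write_of_exists_ne has hs hz n
    · push Not at hz
      rw [List.eq_replicate_of_mem hz]
      exact rotate_write_of_replicate_tails has n z.length
  · exact rotate_write_of_not_prefix has hsy _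

/-- For `x, y ∈ A*` and `a ∈ A`, the queue actions `[x̄ y a]` and `[x̄ a y]` are related by
the reflexive-transitive closure of the transposition relation on `Q`. -/
theorem stmt14 [Fintype A] [Nontrivial A] (x y : List A) (a : A) :
    Relation.ReflTransGen (fun p q : QAct A => ∃ r s : QAct A, p = r * s ∧ q = s * r)
      (cls (R x ++ W y ++ [Act.wr a])) (cls (R x ++ [Act.wr a] ++ W y)) :=
  stmt14_general x y a
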